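/- arXiv:2512.17285 — 3 statements merged into one kernel-verified Lean document; each statement's English description precedes it below -/
import Mathlib

section
/- (Banakiewicz) Let x : ℕ → ℝ be a fast convergent sequence of positive terms (x(n) > ∑_{i>n} x(i) for all n) with ∑ₙ x(n) < ∞. Then the center of distances of the central Cantor set E(x) is not minimal, i.e., 𝒞(E(x)) ≠ {0} ∪ { x(n) : n ∈ ℕ }, if and only if at least one of the following holds: (B1) there exists n ≥ 3 with x(n−2) = 4·x(n) and x(n−1) = 2·x(n); (B2) there exists n ≥ 4 with x(n−3) = 9·x(n), x(n−2) = 5·x(n), and x(n−1) = 2·x(n); (B3) there exists n ≥ 4 with x(n−3) = 10·x(n), x(n−2) = 6·x(n), and x(n−1) = 2·x(n). -/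
/-!
Write `T n` for the achievement set of `∑_{i > n} x i` and `r n = max (T n)`. All that is used
about these sets is `T n = T (n+1) ∪ (x (n+1) + T (n+1))`, `0, r n ∈ T n ⊆ [0, r n]` and
`r n < x n` (`TailSystem`).

For the converse direction, in configuration (B1) the last tail `T n` is copied at the levels
`j * x n` with `j ∈ {0, …, 7}`, and each level can be moved by `3` up or down; in (B2) and (B3)
the same works with the shifts `6` and `7`. So `3 x n`, `6 x n`, `7 x n` respectively belong to the
center (`TailSystem.exists_new_distance`), and they lie strictly between consecutive terms.

For the forward direction, let `d` be a positive distance in the center that is not a term. Then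
`d = q + t` with `q = x k` its leading term and `0 < t ∈ T k`. Moving the point `r k` shows `k ≥ 2`;
put `p = x (k-1)` and `s = p - q > r k`. Moving the points of `T k` shows that `T k + t ⊆ T k`
modulo `s`, so the `s`-periodic set `P = T k + sℤ` is mapped into itself by the translation `t`.
As `P` has a gap, its translations form a cyclic group `uℤ` (`GapPeriodic.exists_generator`);
write `s = N u`, `t = m u`. Moving the points of `q + T k` shows that `q - s + t` is also a
translation of `P`, whence `q = M u` and `p = (M + N) u` with `N ≤ M ≤ max N (2 (N - m))`
(`TailSystem.exists_block`).

Now `T k` consists of `N` consecutive periods of `P`. Comparing its central gap with `P` shows that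
`N` is even, `x (k+1) = (N/2) u`, and `T (k+1)` consists of `N/2` periods (`TailSystem.halve`).
If `N = 2`, then `p, q, x (k+1)` is `4u, 2u, u`. If `N = 4`, then `M ∈ {4, 5, 6}`, giving (B1), (B2),
(B3). If `N ≥ 8`, then `x (k+1), x (k+2), x (k+3)` are in ratio `4 : 2 : 1`.
-/


open Set Filter Topology MeasureTheory
open scoped Pointwise

/-- The achievement set (set of subsums) of the series `∑_{n ≥ 1} x n`
(sequences are indexed by `n ≥ 1`; the value `x 0` is irrelevant). -/
def achievementSet (x : ℕ → ℝ) : Set ℝ :=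
  {y : ℝ | ∃ A : Set ℕ, A ⊆ {n | 1 ≤ n} ∧ HasSum (fun n : A => x (n : ℕ)) y}

/-- The `n`-th remainder `r n = ∑_{i > n} x i` of a series. -/
noncomputable def remainder (x : ℕ → ℝ) (n : ℕ) : ℝ :=
  ∑' i : {i : ℕ // n < i}, x (i : ℕ)

/-- The set of Kakeya conditions `K(x) = {n ≥ 1 : x n > r n}`. -/
def kakeyaSet (x : ℕ → ℝ) : Set ℕ :=
  {n : ℕ | 1 ≤ n ∧ remainder x n < x n}

/-- A Cantor set: a set homeomorphic to the Cantor ternary set. -/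
def IsCantorSet (A : Set ℝ) : Prop :=
  Nonempty (A ≃ₜ cantorSet)

/-- A multi-interval set: the union of finitely many (at least one)
nondegenerate compact intervals. -/
def IsMultiInterval (A : Set ℝ) : Prop :=
  ∃ S : Finset (ℝ × ℝ), S.Nonempty ∧ (∀ p ∈ S, p.1 < p.2) ∧
    A = ⋃ p ∈ S, Set.Icc p.1 p.2

/-- The gaps of a set `A ⊆ ℝ`: the bounded connected components of its complement. -/
def gaps (A : Set ℝ) : Set (Set ℝ) :=
  {G | (∃ x ∉ A, G = connectedComponentIn Aᶜ x) ∧ Bornology.IsBounded G}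

/-- The nondegenerate connected components of a set `A ⊆ ℝ`. -/
def intervalComponents (A : Set ℝ) : Set (Set ℝ) :=
  {I | (∃ x ∈ A, I = connectedComponentIn A x) ∧ ¬ I.Subsingleton}

/-- A Cantorval: a nonempty compact subset of `ℝ` possessing at least one gap and at
least one nondegenerate component, such that both endpoints of every gap are
accumulation points both of other gaps and of nondegenerate components. -/
def IsCantorval (A : Set ℝ) : Prop :=
  A.Nonempty ∧ IsCompact A ∧ (gaps A).Nonempty ∧ (intervalComponents A).Nonempty ∧
    ∀ G ∈ gaps A, ∀ p ∈ ({sInf G, sSup G} : Set ℝ),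
      (∀ ε > (0 : ℝ), ∃ G' ∈ gaps A, G' ≠ G ∧ (G' ∩ Metric.ball p ε).Nonempty) ∧
      (∀ ε > (0 : ℝ), ∃ I ∈ intervalComponents A, (I ∩ (Metric.ball p ε \ {p})).Nonempty)

/-- The center of distances of a set `A ⊆ ℝ`. -/
def centerOfDistances (A : Set ℝ) : Set ℝ :=
  {d : ℝ | 0 ≤ d ∧ ∀ a ∈ A, ∃ b ∈ A, |a - b| = d}

/-! ### Tails of the series -/

/-- The achievement set of the tail `∑_{i > n} x i`. -/
def tailSet (x : ℕ → ℝ) (n : ℕ) : Set ℝ :=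
  {y : ℝ | ∃ A : Set ℕ, A ⊆ {i | n < i} ∧ HasSum (fun i : A => x (i : ℕ)) y}

/-- The properties of the tail achievement sets `T n` and the remainders `r n` of a fast
convergent series on which the whole argument rests. -/
structure TailSystem (x : ℕ → ℝ) (T : ℕ → Set ℝ) (r : ℕ → ℝ) : Prop where
  step : ∀ n y, y ∈ T n ↔ y ∈ T (n + 1) ∨ y - x (n + 1) ∈ T (n + 1)
  zero_mem : ∀ n, 0 ∈ T n
  top_mem : ∀ n, r n ∈ T n
  nonneg : ∀ n, ∀ y ∈ T n, 0 ≤ y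
  le_top : ∀ n, ∀ y ∈ T n, y ≤ r n
  r_succ : ∀ n, r n = x (n + 1) + r (n + 1)
  fast : ∀ n, r (n + 1) < x (n + 1)
  pos : ∀ n, 0 < x (n + 1)
  small : ∀ ε > 0, ∀ n, ∃ m, n ≤ m ∧ x (m + 1) < ε

lemma mem_tailSet_iff {x : ℕ → ℝ} {n : ℕ} {y : ℝ} :
    y ∈ tailSet x n ↔ ∃ A : Set ℕ, A ⊆ {i | n < i} ∧ HasSum (A.indicator x) y := by
  unfold tailSet
  simp only [Set.mem_ofPred_eq]
  refine exists_congr fun A => and_congr_right fun _ => ?_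
  exact hasSum_subtype_iff_indicator

lemma tailSet_step (x : ℕ → ℝ) (n : ℕ) (y : ℝ) :
    y ∈ tailSet x n ↔ y ∈ tailSet x (n + 1) ∨ y - x (n + 1) ∈ tailSet x (n + 1) := by
  simp only [mem_tailSet_iff]
  have hs : HasSum (fun i => if i = n + 1 then x (n + 1) else 0) (x (n + 1)) :=
    hasSum_ite_eq (n + 1) (x (n + 1))
  constructor
  · rintro ⟨A, hA, h⟩
    by_cases hn : n + 1 ∈ A
    · right
      refine ⟨A \ {n + 1}, ?_, ?_⟩
      · rintro i ⟨hi, hi'⟩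
        have h1 : n < i := hA hi
        have h2 : i ≠ n + 1 := hi'
        show n + 1 < i
        omega
      · have h3 := h.sub hs
        rw [show (A \ {n + 1}).indicator x =
          fun i => A.indicator x i - (if i = n + 1 then x (n + 1) else 0) from ?_]
        · exact h3
        funext i
        by_cases hi : i = n + 1
        · subst hi; simp [hn]
        · by_cases hiA : i ∈ A <;> simp [hi, hiA]
    · left
      refine ⟨A, ?_, h⟩
      intro i hi
      have h1 : n < i := hA hi
      have h2 : i ≠ n + 1 := fun e => hn (e ▸ hi)
      show n + 1 < i
      omega
  · rintro (⟨A, hA, h⟩ | ⟨A, hA, h⟩)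
    · refine ⟨A, fun i hi => ?_, h⟩
      have h1 : n + 1 < i := hA hi
      show n < i
      omega
    · refine ⟨insert (n + 1) A, ?_, ?_⟩
      · rintro i (hi | hi)
        · show n < i
          omega
        · have h1 : n + 1 < i := hA hi
          show n < i
          omega
      · have h2 : n + 1 ∉ A := fun e => lt_irrefl (n + 1) (hA e)
        have h3 := h.add hs
        rw [sub_add_cancel] at h3
        convert h3 using 1
        funext i
        by_cases hi : i = n + 1
        · subst hi; simp [h2]
        · by_cases hiA : i ∈ A <;> simp [hi, hiA]

lemma hasSum_remainder {x : ℕ → ℝ} (hsum : Summable x) (n : ℕ) :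
    HasSum (({i | n < i} : Set ℕ).indicator x) (remainder x n) := by
  rw [← hasSum_subtype_iff_indicator]
  exact (hsum.subtype {i | n < i}).hasSum

lemma tailSystem {x : ℕ → ℝ} (hpos : ∀ n, 1 ≤ n → 0 < x n) (hsum : Summable x)
    (hfast : ∀ n, 1 ≤ n → remainder x n < x n) :
    TailSystem x (tailSet x) (remainder x) where
  step := tailSet_step x
  zero_mem n := mem_tailSet_iff.2 ⟨∅, by simp, by simp [hasSum_zero]⟩
  top_mem n := mem_tailSet_iff.2 ⟨_, subset_rfl, hasSum_remainder hsum n⟩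
  nonneg n y hy := by
    obtain ⟨A, hA, h⟩ := mem_tailSet_iff.1 hy
    refine h.nonneg fun i => Set.indicator_nonneg (fun i hi => ?_) i
    have : n < i := hA hi
    exact (hpos i (by omega)).le
  le_top n y hy := by
    obtain ⟨A, hA, h⟩ := mem_tailSet_iff.1 hy
    refine hasSum_le (fun i => ?_) h (hasSum_remainder hsum n)
    by_cases hi : n < i
    · have := (hpos i (by omega)).le
      by_cases hiA : i ∈ A <;> simp [hi, hiA, this]
    · have hiA : i ∉ A := fun e => hi (hA e)
      simp [hi, hiA]
  r_succ n := by
    have h := (hasSum_remainder hsum (n + 1)).add (hasSum_ite_eq (n + 1) (x (n + 1)))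
    rw [add_comm (x (n + 1))]
    refine (hasSum_remainder hsum n).unique ?_
    convert h using 1
    funext i
    by_cases hi : i = n + 1
    · subst hi; simp
    · have : n + 1 < i ↔ n < i := by omega
      simp [Set.indicator, hi, this]
  fast n := hfast (n + 1) (by omega)
  pos n := hpos (n + 1) (by omega)
  small ε hε n := by
    have h := hsum.tendsto_atTop_zero.eventually (gt_mem_nhds hε)
    obtain ⟨m, hm⟩ := h.exists_forall_of_atTop
    exact ⟨max n m, le_max_left _ _, hm _ (by have := le_max_right n m; omega)⟩

/-! ### Translations of a periodic set with a gap -/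

/-- A set with period `s` that contains `0` and misses the interval `(-g, 0)`: a subset of the
circle `ℝ / sℤ` with a gap. -/
structure GapPeriodic (P : Set ℝ) (s g : ℝ) : Prop where
  s_pos : 0 < s
  g_pos : 0 < g
  periodic : ∀ b, b + s ∈ P ↔ b ∈ P
  zero_mem : 0 ∈ P
  gap : ∀ b ∈ P, -g < b → 0 ≤ b

lemma add_int_mul_mem_iff {P : Set ℝ} {s : ℝ} (h : ∀ b, b + s ∈ P ↔ b ∈ P) (n : ℤ) (b : ℝ) :
    b + n * s ∈ P ↔ b ∈ P := by
  induction n with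
  | zero => simp
  | succ n ih =>
    rw [← ih, ← h (b + ((n : ℤ) : ℝ) * s)]
    push_cast
    ring_nf
  | pred n ih =>
    rw [← ih, ← h (b + _ * s)]
    push_cast
    ring_nf

lemma add_nat_mul_mem {P : Set ℝ} {v : ℝ} (h : ∀ b ∈ P, b + v ∈ P) (n : ℕ) :
    ∀ b ∈ P, b + n * v ∈ P := by
  induction n with
  | zero => simp
  | succ n ih =>
    intro b hb
    have := h _ (ih b hb)
    push_cast
    convert this using 1
    ring

/-- A nonzero translation of size less than `g` is impossible: its iterates starting from `0`
would enter the gap. -/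
lemma GapPeriodic.eq_zero_of_small {P : Set ℝ} {s g : ℝ} (hP : GapPeriodic P s g) {w : ℝ}
    (hw : ∀ b ∈ P, b + w ∈ P) (hwg : |w| < g) : w = 0 := by
  have hlt := abs_lt.1 hwg
  have h0 : 0 ≤ w := by
    have := hw 0 hP.zero_mem
    rw [zero_add] at this
    exact hP.gap w this hlt.1
  by_contra hne
  have hwpos : 0 < w := lt_of_le_of_ne h0 (Ne.symm hne)
  have hc : 0 < ⌈s / w⌉₊ := Nat.ceil_pos.2 (div_pos hP.s_pos hwpos)
  obtain ⟨e, he⟩ := Nat.exists_eq_succ_of_ne_zero hc.ne'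
  have h1 : (e : ℝ) < s / w := Nat.lt_ceil.1 (by omega)
  have h2 : s / w ≤ ((e + 1 : ℕ) : ℝ) := by
    have := Nat.le_ceil (s / w)
    rwa [he] at this
  rw [lt_div_iff₀ hwpos] at h1
  rw [div_le_iff₀ hwpos] at h2
  push_cast at h2
  have h3 := add_nat_mul_mem hw e 0 hP.zero_mem
  rw [zero_add] at h3
  have h4 : (e * w - s) ∈ P := by
    rw [← hP.periodic]
    simpa using h3
  have := hP.gap _ h4 (by linarith [hlt.2])
  linarith

/-- Translations mapping `P` into itself are invertible: by Dirichlet approximation some positive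
multiple of `v` is within `g` of `sℤ`, hence lies in `sℤ`. -/
lemma GapPeriodic.sub_mem {P : Set ℝ} {s g : ℝ} (hP : GapPeriodic P s g) {v : ℝ}
    (hv : ∀ b ∈ P, b + v ∈ P) : ∀ b ∈ P, b - v ∈ P := by
  have hs := hP.s_pos
  obtain ⟨n, hn⟩ := exists_nat_gt (s / g)
  have hnpos : 0 < n := by
    have : (0 : ℝ) < n := lt_trans (div_pos hs hP.g_pos) hn
    exact_mod_cast this
  obtain ⟨k, hk, -, hkn⟩ := Real.exists_nat_abs_mul_sub_round_le (v / s) hnpos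
  set j : ℤ := round (k * (v / s))
  have hw : ∀ b ∈ P, b + (k * v - j * s) ∈ P := by
    intro b hb
    have h1 := add_nat_mul_mem hv k b hb
    rw [← add_int_mul_mem_iff hP.periodic (-j)] at h1
    convert h1 using 1
    push_cast
    ring
  have hsmall : |k * v - j * s| < g := by
    have e : (k : ℝ) * v - j * s = (k * (v / s) - j) * s := by
      field_simp
    rw [e, abs_mul, abs_of_pos hs]
    rw [div_lt_iff₀ hP.g_pos] at hn
    calc _ ≤ 1 / ((n : ℝ) + 1) * s := by gcongr
      _ < g := by
        rw [div_mul_eq_mul_div, div_lt_iff₀ (by positivity)]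
        nlinarith [hP.g_pos]
  have h0 := hP.eq_zero_of_small hw hsmall
  intro b hb
  obtain ⟨e, rfl⟩ := Nat.exists_eq_succ_of_ne_zero hk.ne'
  have h1 := add_nat_mul_mem hv e b hb
  rw [← add_int_mul_mem_iff hP.periodic (-j)] at h1
  convert h1 using 1
  push_cast at h0 ⊢
  linarith

/-- The group of translations preserving `P`. -/
def translationGroup (P : Set ℝ) : AddSubgroup ℝ where
  carrier := {v | ∀ b, b + v ∈ P ↔ b ∈ P}
  zero_mem' := by simp
  add_mem' := by
    intro a b ha hb c
    rw [← add_assoc, hb, ha]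
  neg_mem' := by
    intro a ha b
    rw [← ha (b + -a)]
    simp

/-- The translations of `P` form an infinite cyclic group. -/
lemma GapPeriodic.exists_generator {P : Set ℝ} {s g : ℝ} (hP : GapPeriodic P s g) :
    ∃ u > 0, (∀ b, b + u ∈ P ↔ b ∈ P) ∧ ∀ v, (∀ b ∈ P, b + v ∈ P) → ∃ n : ℤ, v = n * u := by
  have hdisj : Disjoint (translationGroup P : Set ℝ) (Set.Ioo 0 g) := by
    rw [Set.disjoint_left]
    rintro v hv ⟨h1, h2⟩
    have := hP.eq_zero_of_small (w := v) (fun b hb => (hv b).2 hb) (by rwa [abs_of_pos h1])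
    exact h1.ne' this
  obtain ⟨b, hb⟩ := AddSubgroup.cyclic_of_isolated_zero hP.g_pos hdisj
  have hmem : ∀ v, (∀ b ∈ P, b + v ∈ P) → ∃ n : ℤ, v = n * b := by
    intro v hv
    have : v ∈ translationGroup P := by
      intro c
      refine ⟨fun h => ?_, hv c⟩
      simpa using hP.sub_mem hv _ h
    rw [hb, AddSubgroup.mem_closure_singleton] at this
    obtain ⟨n, hn⟩ := this
    exact ⟨n, by rw [← hn]; simp⟩
  have hbP : b ∈ translationGroup P := by
    rw [hb]; exact AddSubgroup.subset_closure rfl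
  have hb0 : b ≠ 0 := by
    rintro rfl
    obtain ⟨n, hn⟩ := hmem s (fun c hc => (hP.periodic c).2 hc)
    have := hP.s_pos
    simp at hn
    linarith
  rcases lt_or_gt_of_ne hb0 with h | h
  · refine ⟨-b, by linarith, (translationGroup P).neg_mem hbP, fun v hv => ?_⟩
    obtain ⟨n, hn⟩ := hmem v hv
    exact ⟨-n, by rw [hn]; push_cast; ring⟩
  · exact ⟨b, h, hbP, hmem⟩

/-! ### Elementary properties of the tails -/

namespace TailSystem

variable {x : ℕ → ℝ} {T : ℕ → Set ℝ} {r : ℕ → ℝ}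

lemma mono (h : TailSystem x T r) {n m : ℕ} (hnm : n ≤ m) : T m ⊆ T n := by
  induction m, hnm using Nat.le_induction with
  | base => exact subset_rfl
  | succ m _ ih => exact fun y hy => ih ((h.step m y).2 (Or.inl hy))

lemma x_mem (h : TailSystem x T r) {n m : ℕ} (hnm : n ≤ m) : x (m + 1) ∈ T n :=
  h.mono hnm ((h.step m _).2 (Or.inr (by simpa using h.zero_mem (m + 1))))

lemma r_anti (h : TailSystem x T r) {n m : ℕ} (hnm : n ≤ m) : r m ≤ r n :=
  h.le_top n _ (h.mono hnm (h.top_mem m))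

lemma r_pos (h : TailSystem x T r) (n : ℕ) : 0 < r n :=
  lt_of_lt_of_le (h.pos n) (h.le_top n _ (h.x_mem le_rfl))

/-- An element of `T 0` below all of `x 1, …, x n` does not use them. -/
lemma mem_of_lt (h : TailSystem x T r) {y : ℝ} (hy : y ∈ T 0) (n : ℕ)
    (hlt : ∀ i < n, y < x (i + 1)) : y ∈ T n := by
  induction n with
  | zero => exact hy
  | succ n ih =>
    rcases (h.step n y).1 (ih fun i hi => hlt i (by omega)) with h1 | h1
    · exact h1
    · have := h.nonneg _ _ h1
      have := hlt n (by omega)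
      linarith

/-- Every positive element of `T 0` has a leading term `x (k + 1)`. -/
lemma exists_leading (h : TailSystem x T r) {d : ℝ} (hd : d ∈ T 0) (hpos : 0 < d) :
    ∃ k, d ∈ T k ∧ d - x (k + 1) ∈ T (k + 1) := by
  by_contra! hcon
  have hall : ∀ n, d ∈ T n := by
    intro n
    induction n with
    | zero => exact hd
    | succ n ih =>
      exact ((h.step n d).1 ih).resolve_right (hcon n ih)
  obtain ⟨m, -, hm⟩ := h.small d hpos 0
  have := h.le_top _ _ (hall (m + 1))
  have := h.fast m
  linarith

/-- A distance in the center of a tail is in the center of the whole achievement set. -/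
lemma lift_center (h : TailSystem x T r) {d : ℝ} (n : ℕ)
    (hn : ∀ a ∈ T n, ∃ b ∈ T n, |a - b| = d) : ∀ a ∈ T 0, ∃ b ∈ T 0, |a - b| = d := by
  induction n with
  | zero => exact hn
  | succ n ih =>
    refine ih fun a ha => ?_
    rcases (h.step n a).1 ha with h1 | h1
    · obtain ⟨b, hb, hab⟩ := hn a h1
      exact ⟨b, (h.step n b).2 (Or.inl hb), hab⟩
    · obtain ⟨b, hb, hab⟩ := hn _ h1
      refine ⟨b + x (n + 1), (h.step n _).2 (Or.inr (by simpa using hb)), ?_⟩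
      rw [← hab]
      congr 1
      ring

lemma x_mem_center (h : TailSystem x T r) (n : ℕ) :
    ∀ a ∈ T 0, ∃ b ∈ T 0, |a - b| = x (n + 1) := by
  refine h.lift_center n fun a ha => ?_
  have hp := h.pos n
  rcases (h.step n a).1 ha with h1 | h1
  · refine ⟨a + x (n + 1), (h.step n _).2 (Or.inr (by simpa using h1)), ?_⟩
    rw [show a - (a + x (n + 1)) = -x (n + 1) by ring, abs_neg, abs_of_pos hp]
  · refine ⟨a - x (n + 1), (h.step n _).2 (Or.inl h1), ?_⟩
    rw [show a - (a - x (n + 1)) = x (n + 1) by ring, abs_of_pos hp]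

lemma x_lt (h : TailSystem x T r) (n : ℕ) : x (n + 2) < x (n + 1) := by
  have h1 := h.fast n
  have h2 := h.r_succ (n + 1)
  have h3 := h.r_pos (n + 2)
  linarith

lemma x_le (h : TailSystem x T r) {n m : ℕ} (hnm : n ≤ m) : x (m + 1) ≤ x (n + 1) := by
  induction m, hnm using Nat.le_induction with
  | base => exact le_rfl
  | succ m _ ih => exact (h.x_lt m).le.trans ih

/-- A number strictly between consecutive terms is not a term. -/
lemma ne_x (h : TailSystem x T r) {d : ℝ} {n : ℕ} (h1 : x (n + 2) < d) (h2 : d < x (n + 1))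
    (m : ℕ) : d ≠ x (m + 1) := by
  rintro rfl
  rcases Nat.lt_or_ge n m with hm | hm
  · have := h.x_le (n := n + 1) (m := m) hm
    exact absurd h1 (not_lt.2 this)
  · exact absurd h2 (not_lt.2 (h.x_le hm))

end TailSystem

/-! ### The three configurations produce a new distance -/

/-- `A` consists of the numbers `j * c + τ` with `j ∈ L` and `τ ∈ B`. -/
def IsLayered (A B : Set ℝ) (c : ℝ) (L : Finset ℕ) : Prop :=
  ∀ y, y ∈ A ↔ ∃ j ∈ L, y - j * c ∈ B

lemma isLayered_self (B : Set ℝ) (c : ℝ) : IsLayered B B c {0} := by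
  intro y; simp

lemma IsLayered.step {x : ℕ → ℝ} {T : ℕ → Set ℝ} {r : ℕ → ℝ} (h : TailSystem x T r)
    {n a : ℕ} {B : Set ℝ} {c : ℝ} {L : Finset ℕ} (hL : IsLayered (T (n + 1)) B c L)
    (hx : x (n + 1) = a * c) : IsLayered (T n) B c (L ∪ L.image (a + ·)) := by
  intro y
  rw [h.step, hL, hL]
  constructor
  · rintro (⟨j, hj, hy⟩ | ⟨j, hj, hy⟩)
    · exact ⟨j, Finset.mem_union_left _ hj, hy⟩
    · refine ⟨a + j, Finset.mem_union_right _ (Finset.mem_image_of_mem _ hj), ?_⟩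
      convert hy using 1
      rw [hx]; push_cast; ring
  · rintro ⟨j, hj, hy⟩
    rcases Finset.mem_union.1 hj with hj | hj
    · exact Or.inl ⟨j, hj, hy⟩
    · obtain ⟨i, hi, rfl⟩ := Finset.mem_image.1 hj
      refine Or.inr ⟨i, hi, ?_⟩
      convert hy using 1
      rw [hx]; push_cast; ring

/-- If every level of `L` can be moved up or down by `e` inside `L`, then `e * c` is in the
center of distances. -/
lemma IsLayered.center {A B : Set ℝ} {c : ℝ} {L : Finset ℕ} (hL : IsLayered A B c L)
    (hc : 0 < c) (e : ℕ) (he : ∀ j ∈ L, j + e ∈ L ∨ (e ≤ j ∧ j - e ∈ L)) :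
    ∀ a ∈ A, ∃ b ∈ A, |a - b| = e * c := by
  intro a ha
  have hec : 0 ≤ (e : ℝ) * c := by positivity
  obtain ⟨j, hj, hy⟩ := (hL a).1 ha
  rcases he j hj with h | ⟨h1, h⟩
  · refine ⟨a + e * c, (hL _).2 ⟨_, h, ?_⟩, ?_⟩
    · convert hy using 1
      push_cast; ring
    · rw [show a - (a + e * c) = -(e * c) by ring, abs_neg, abs_of_nonneg hec]
  · refine ⟨a - e * c, (hL _).2 ⟨_, h, ?_⟩, ?_⟩
    · convert hy using 1
      push_cast [Nat.cast_sub h1]; ring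
    · rw [show a - (a - e * c) = e * c by ring, abs_of_nonneg hec]

/-- The disjunction of the three configurations, with the index of the first term shifted to
start at `n + 1`. -/
def BCond (x : ℕ → ℝ) : Prop :=
  ∃ n, (x (n + 1) = 4 * x (n + 3) ∧ x (n + 2) = 2 * x (n + 3)) ∨
    (x (n + 1) = 9 * x (n + 4) ∧ x (n + 2) = 5 * x (n + 4) ∧ x (n + 3) = 2 * x (n + 4)) ∨
    (x (n + 1) = 10 * x (n + 4) ∧ x (n + 2) = 6 * x (n + 4) ∧ x (n + 3) = 2 * x (n + 4))

lemma TailSystem.exists_new_distance {x : ℕ → ℝ} {T : ℕ → Set ℝ} {r : ℕ → ℝ}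
    (h : TailSystem x T r) (hB : BCond x) :
    ∃ d, 0 < d ∧ (∀ m, d ≠ x (m + 1)) ∧ ∀ a ∈ T 0, ∃ b ∈ T 0, |a - b| = d := by
  obtain ⟨n, ⟨h1, h2⟩ | ⟨h1, h2, h3⟩ | ⟨h1, h2, h3⟩⟩ := hB
  · have hc := h.pos (n + 2)
    refine ⟨(3 : ℕ) * x (n + 3), by positivity, h.ne_x (n := n) ?_ ?_, h.lift_center n ?_⟩
    · rw [h2]; push_cast; linarith
    · rw [h1]; push_cast; linarith
    · have l1 := (isLayered_self (T (n + 3)) (x (n + 3))).step h (n := n + 2) (a := 1) (by simp)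
      have l2 := l1.step h (n := n + 1) (a := 2) (by simpa using h2)
      have l3 := l2.step h (n := n) (a := 4) (by simpa using h1)
      exact l3.center hc 3 (by decide)
  · have hc := h.pos (n + 3)
    refine ⟨(6 : ℕ) * x (n + 4), by positivity, h.ne_x (n := n) ?_ ?_, h.lift_center n ?_⟩
    · rw [h2]; push_cast; linarith
    · rw [h1]; push_cast; linarith
    · have l1 := (isLayered_self (T (n + 4)) (x (n + 4))).step h (n := n + 3) (a := 1) (by simp)
      have l2 := l1.step h (n := n + 2) (a := 2) (by simpa using h3)
      have l3 := l2.step h (n := n + 1) (a := 5) (by simpa using h2)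
      have l4 := l3.step h (n := n) (a := 9) (by simpa using h1)
      exact l4.center hc 6 (by decide)
  · have hc := h.pos (n + 3)
    refine ⟨(7 : ℕ) * x (n + 4), by positivity, h.ne_x (n := n) ?_ ?_, h.lift_center n ?_⟩
    · rw [h2]; push_cast; linarith
    · rw [h1]; push_cast; linarith
    · have l1 := (isLayered_self (T (n + 4)) (x (n + 4))).step h (n := n + 3) (a := 1) (by simp)
      have l2 := l1.step h (n := n + 2) (a := 2) (by simpa using h3)
      have l3 := l2.step h (n := n + 1) (a := 6) (by simpa using h2)
      have l4 := l3.step h (n := n) (a := 10) (by simpa using h1)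
      exact l4.center hc 7 (by decide)

/-! ### A new distance forces one of the configurations -/

/-- The tail `Tn`, with maximum `rn`, is the part of the `u`-periodic set `P` in `N` consecutive periods, and `u`
generates all translations of `P`. The number `g` is the length of the gap of `P` before `0`. -/
structure IsBlock (P : Set ℝ) (u g : ℝ) (Tn : Set ℝ) (rn : ℝ) (N : ℕ) : Prop where
  u_pos : 0 < u
  g_lt : g < u
  periodic : ∀ b, b + u ∈ P ↔ b ∈ P
  gen : ∀ v, (∀ b ∈ P, b + v ∈ P) → ∃ n : ℤ, v = n * u
  zero_mem : 0 ∈ P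
  g_pos : 0 < g
  gap : ∀ b ∈ P, -g < b → 0 ≤ b
  mem_iff : ∀ y, y ∈ Tn ↔ y ∈ P ∧ 0 ≤ y ∧ y < N * u
  top : rn = N * u - g

/-- To translate `P` into itself it is enough to translate one period. -/
lemma mem_of_period {P : Set ℝ} {u v : ℝ} (hu : 0 < u) (hper : ∀ b, b + u ∈ P ↔ b ∈ P)
    (h : ∀ b ∈ P, 0 ≤ b → b < u → b + v ∈ P) : ∀ b ∈ P, b + v ∈ P := by
  intro b hb
  have h1 := Int.floor_le (b / u)
  have h2 := Int.lt_floor_add_one (b / u)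
  rw [le_div_iff₀ hu] at h1
  rw [div_lt_iff₀ hu] at h2
  have h3 := (add_int_mul_mem_iff hper (-⌊b / u⌋) b).2 hb
  push_cast at h3
  have h4 := h _ h3 (by linarith) (by linarith)
  rw [← add_int_mul_mem_iff hper (⌊b / u⌋)] at h4
  convert h4 using 1
  ring

/-- A block of `N ≥ 2` periods has `N` even, its first term is `(N / 2) * u`, and the next tail is
a block of `N / 2` periods. For odd `N`, the first term would be `i * u + f` with
`0 < f < u`, and `f` would be a translation of `P`. -/
lemma TailSystem.halve {x : ℕ → ℝ} {T : ℕ → Set ℝ} {r : ℕ → ℝ} (h : TailSystem x T r)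
    {P : Set ℝ} {u g : ℝ} {n N : ℕ} (hI : IsBlock P u g (T n) (r n) N) (hN : 2 ≤ N) :
    ∃ i, N = 2 * i ∧ x (n + 1) = i * u ∧ IsBlock P u g (T (n + 1)) (r (n + 1)) i := by
  have hu := hI.u_pos
  have hg := hI.g_pos
  have hgu := hI.g_lt
  have hr := h.r_succ n
  rw [hI.top] at hr
  have hf := h.fast n
  have hrpos := h.r_pos (n + 1)
  -- the central gap of `T n`
  have hgap : ∀ y ∈ T n, r (n + 1) < y → x (n + 1) ≤ y := by
    intro y hy hlt
    rcases (h.step n y).1 hy with h1 | h1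
    · have := h.le_top _ _ h1
      linarith
    · have := h.nonneg _ _ h1
      linarith
  have hmul : ∀ e : ℕ, e < N → (e : ℝ) * u ∈ T n := by
    intro e he
    rw [hI.mem_iff]
    refine ⟨?_, by positivity, ?_⟩
    · have := (add_int_mul_mem_iff hI.periodic e 0).2 hI.zero_mem
      simpa using this
    · have : (e : ℝ) < N := by exact_mod_cast he
      exact mul_lt_mul_of_pos_right this hu
  have hxP : x (n + 1) ∈ P := ((hI.mem_iff _).1 (h.x_mem le_rfl)).1
  obtain ⟨i, hi | hi⟩ := Nat.even_or_odd' N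
  · have hNi : (N : ℝ) = 2 * i := by rw [hi]; push_cast; ring
    rw [hNi] at hr
    have hge : (i : ℝ) * u ≤ x (n + 1) := by
      by_contra! hlt
      have h1 := (add_int_mul_mem_iff hI.periodic (-i) _).2 hxP
      push_cast at h1
      have := hI.gap _ h1 (by linarith)
      linarith
    have hle : x (n + 1) ≤ i * u := by
      by_contra! hlt
      have := hgap _ (hmul i (by omega)) (by linarith)
      linarith
    have heq := le_antisymm hle hge
    refine ⟨i, hi, heq, { hI with mem_iff := ?_, top := by linarith }⟩
    intro y
    constructor
    · intro hy
      have h1 := (hI.mem_iff y).1 ((h.step n y).2 (Or.inl hy))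
      have h2 := h.le_top _ _ hy
      exact ⟨h1.1, h1.2.1, by linarith⟩
    · rintro ⟨h1, h2, h3⟩
      have h4 : y ∈ T n := (hI.mem_iff y).2 ⟨h1, h2, by rw [hNi]; nlinarith⟩
      rcases (h.step n y).1 h4 with h5 | h5
      · exact h5
      · have := h.nonneg _ _ h5
        linarith
  · exfalso
    have hNi : (N : ℝ) = 2 * i + 1 := by rw [hi]; push_cast; ring
    have hi1 : (1 : ℝ) ≤ i := by
      have : 1 ≤ i := by omega
      exact_mod_cast this
    rw [hNi] at hr
    have hρ : (i : ℝ) * u ≤ r (n + 1) := by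
      by_contra! hlt
      have := hgap _ (hmul i (by omega)) hlt
      linarith
    obtain ⟨z, hz⟩ := hI.gen (x (n + 1) - i * u) (by
      refine mem_of_period hu hI.periodic fun b hb hb0 hbu => ?_
      have hbT : b ∈ T n := (hI.mem_iff b).2 ⟨hb, hb0, by rw [hNi]; nlinarith⟩
      have hbT' : b ∈ T (n + 1) := by
        rcases (h.step n b).1 hbT with h5 | h5
        · exact h5
        · have := h.nonneg _ _ h5
          nlinarith
      have h6 : b + x (n + 1) ∈ T n := (h.step n _).2 (Or.inr (by simpa using hbT'))
      have h7 := ((hI.mem_iff _).1 h6).1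
      rw [← add_int_mul_mem_iff hI.periodic (-i)] at h7
      convert h7 using 1
      push_cast; ring)
    have z0 : (0 : ℝ) < z := by
      have : 0 < (z : ℝ) * u := by linarith
      exact pos_of_mul_pos_left this hu.le
    have z1 : (z : ℝ) < 1 := by
      have : (z : ℝ) * u < 1 * u := by linarith
      exact lt_of_mul_lt_mul_right this hu.le
    have z0' : 0 < z := by exact_mod_cast z0
    have z1' : z < 1 := by exact_mod_cast z1
    omega

/-- A new distance `x (k + 2) + t` forces `x (k + 2)` and `x (k + 1)` to be integer multiples of
the generating translation `u` of the set `T (k + 2) + (x (k + 1) - x (k + 2)) ℤ`. -/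
lemma TailSystem.exists_block {x : ℕ → ℝ} {T : ℕ → Set ℝ} {r : ℕ → ℝ} (h : TailSystem x T r)
    {k : ℕ} {t : ℝ} (htT : t ∈ T (k + 2)) (ht : 0 < t)
    (hC : ∀ a ∈ T (k + 1), a - (x (k + 2) + t) ∈ T (k + 1) ∨ a + (x (k + 2) + t) ∈ T (k + 1) ∨
      a + (x (k + 2) + t) - x (k + 1) ∈ T (k + 1)) :
    ∃ (P : Set ℝ) (u g : ℝ) (N m M : ℕ), IsBlock P u g (T (k + 2)) (r (k + 2)) N ∧
      1 ≤ m ∧ m < N ∧ N ≤ M ∧ (M ≤ N ∨ M + 2 * m ≤ 2 * N) ∧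
      x (k + 2) = M * u ∧ x (k + 1) = (M + N) * u := by
  obtain ⟨q, hq⟩ : ∃ q, q = x (k + 2) := ⟨_, rfl⟩
  obtain ⟨s, hs⟩ : ∃ s, s = x (k + 1) - x (k + 2) := ⟨_, rfl⟩
  have hp : x (k + 1) = s + q := by linarith
  have hrq : r (k + 2) < q := hq ▸ h.fast (k + 1)
  have hrs : r (k + 2) < s := by
    have h1 := h.fast k
    have h2 := h.r_succ (k + 1)
    simp only [Nat.add_assoc, Nat.reduceAdd] at h1 h2
    linarith
  rw [← hq, hp] at hC
  rw [hp, ← hq]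
  have hstep : ∀ y, y ∈ T (k + 1) ↔ y ∈ T (k + 2) ∨ y - q ∈ T (k + 2) := by
    intro y; rw [hq]; exact h.step (k + 1) y
  have hn := h.nonneg (k + 2)
  have hl := h.le_top (k + 2)
  have hr0 := h.r_pos (k + 2)
  have hsmall : ∀ ε > 0, ∃ b ∈ T (k + 2), 0 < b ∧ b < ε := by
    intro ε hε
    obtain ⟨m, hm, hm'⟩ := h.small ε hε (k + 2)
    exact ⟨_, h.x_mem hm, h.pos m, hm'⟩
  have h0 := h.zero_mem (k + 2)
  have htop := h.top_mem (k + 2)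
  generalize T (k + 2) = T₂ at *
  generalize r (k + 2) = ρ at *
  have htρ := hl t htT
  -- the condition at `a ∈ T₂`
  have hA : ∀ a ∈ T₂, a + t ∈ T₂ ∨ a + t - s ∈ T₂ := by
    intro a ha
    have ha0 := hn a ha
    have haρ := hl a ha
    rcases hC a ((hstep a).2 (Or.inl ha)) with h1 | h1 | h1
    · rcases (hstep _).1 h1 with h2 | h2
      · have := hn _ h2; linarith
      · have := hn _ h2; linarith
    · rcases (hstep _).1 h1 with h2 | h2
      · have := hl _ h2; linarith
      · left; convert h2 using 1; ring
    · rcases (hstep _).1 h1 with h2 | h2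
      · right; convert h2 using 1; ring
      · have := hn _ h2; linarith
  -- the condition at `q + a` with `a ∈ T₂`
  have hA' : ∀ a ∈ T₂, a - t ∈ T₂ ∨ a + (q - s + t) ∈ T₂ ∨ a + t - s ∈ T₂ := by
    intro a ha
    have ha0 := hn a ha
    have haρ := hl a ha
    rcases hC (a + q) ((hstep _).2 (Or.inr (by simpa using ha))) with h1 | h1 | h1
    · rcases (hstep _).1 h1 with h2 | h2
      · left; convert h2 using 1; ring
      · have := hn _ h2; linarith
    · rcases (hstep _).1 h1 with h2 | h2
      · have := hl _ h2; linarith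
      · have := hl _ h2; linarith
    · rcases (hstep _).1 h1 with h2 | h2
      · right; left; convert h2 using 1; ring
      · right; right; convert h2 using 1; ring
  have hspos : 0 < s := by linarith
  obtain ⟨P, hPdef⟩ : ∃ P : Set ℝ, ∀ b, b ∈ P ↔ ∃ n : ℤ, b - n * s ∈ T₂ :=
    ⟨{b | ∃ n : ℤ, b - n * s ∈ T₂}, fun _ => Iff.rfl⟩
  have hTP : ∀ b ∈ T₂, b ∈ P := fun b hb => (hPdef b).2 ⟨0, by simpa using hb⟩
  have hPT : ∀ b ∈ P, ρ - s < b → b < s → b ∈ T₂ := by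
    intro b hb h1 h2
    obtain ⟨n, hb⟩ := (hPdef b).1 hb
    have h3 := hn _ hb
    have h4 := hl _ hb
    have n0 : (n : ℝ) < 1 := lt_of_mul_lt_mul_right (by linarith : (n : ℝ) * s < 1 * s) hspos.le
    have n1 : (-1 : ℝ) < n := lt_of_mul_lt_mul_right (by linarith : -1 * s < (n : ℝ) * s) hspos.le
    have n0' : n < 1 := by exact_mod_cast n0
    have n1' : -1 < n := by exact_mod_cast n1
    have : n = 0 := by omega
    subst this
    simpa using hb
  have hP : GapPeriodic P s (s - ρ) :=
    { s_pos := hspos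
      g_pos := by linarith
      periodic := by
        intro b
        rw [hPdef, hPdef]
        constructor
        · rintro ⟨n, hb⟩
          exact ⟨n - 1, by convert hb using 1; push_cast; ring⟩
        · rintro ⟨n, hb⟩
          exact ⟨n + 1, by convert hb using 1; push_cast; ring⟩
      zero_mem := hTP 0 h0
      gap := by
        intro b hb h1
        by_contra! h2
        have := hn _ (hPT b hb (by linarith) (by linarith))
        linarith }
  have htP : ∀ b ∈ P, b + t ∈ P := by
    intro b hb
    obtain ⟨n, hb⟩ := (hPdef b).1 hb
    rcases hA _ hb with h1 | h1
    · exact (hPdef _).2 ⟨n, by convert h1 using 1; ring⟩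
    · exact (hPdef _).2 ⟨n + 1, by convert h1 using 1; push_cast; ring⟩
  obtain ⟨u, hu, hper, hgen⟩ := hP.exists_generator
  obtain ⟨N, hN⟩ := hgen s fun b hb => (hP.periodic b).2 hb
  obtain ⟨m, hm⟩ := hgen t htP
  -- integers are compared through their multiples of `u`
  have hlt : ∀ a b : ℤ, (a : ℝ) * u < b * u → a < b := by
    intro a b hab
    exact_mod_cast lt_of_mul_lt_mul_right hab hu.le
  have hle : ∀ a b : ℤ, a ≤ b → (a : ℝ) * u ≤ b * u := by
    intro a b hab
    have : (a : ℝ) ≤ b := by exact_mod_cast hab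
    exact mul_le_mul_of_nonneg_right this hu.le
  have hm1 : 0 < m := hlt 0 m (by push_cast; linarith)
  have hmN : m < N := hlt m N (by linarith)
  have hut : u ≤ t := by have := hle 1 m (by omega); push_cast at this; linarith
  have hus : t + u ≤ s := by
    have := hle (m + 1) N (by omega); push_cast at this; linarith
  -- `P` has points in `(0, u)`, so the gap is shorter than `u`
  have hgu : s - ρ < u := by
    obtain ⟨b, hb, hb0, hbu⟩ := hsmall u hu
    by_contra! hcon
    have h1 : b - u ∈ P := by
      rw [← hper]
      simpa using hTP b hb
    have := hP.gap _ h1 (by linarith)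
    linarith
  -- `q - s + t` is a translation of `P`
  have hcT : ∀ b ∈ T₂, b < t → b < s - t → b + (q - s + t) ∈ T₂ := by
    intro b hb h1 h2
    rcases hA' b hb with h3 | h3 | h3
    · have := hn _ h3; linarith
    · exact h3
    · have := hn _ h3; linarith
  obtain ⟨j, hj⟩ := hgen (q - s + t) (by
    refine mem_of_period hu hper fun b hb hb0 hbu => ?_
    exact hTP _ (hcT b (hPT b hb (by linarith) (by linarith)) (by linarith) (by linarith)))
  obtain ⟨M, hM⟩ : ∃ M : ℤ, M = N - m + j := ⟨_, rfl⟩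
  have hMq : q = M * u := by rw [hM]; push_cast; linarith
  have hNM : N ≤ M := by
    have := hlt (N - 1) M (by push_cast; linarith)
    omega
  have hbound : ∀ i : ℤ, 0 ≤ i → i < m → i < N - m → i + j < N := by
    intro i hi0 him hiN
    have e0 := hle 0 i hi0
    have e1 := hle (i + 1) m (by omega)
    have e2 := hle (i + 1) (N - m) (by omega)
    push_cast at e0 e1 e2
    have hiP : (i : ℝ) * u ∈ P := by
      have := (add_int_mul_mem_iff hper i 0).2 hP.zero_mem
      simpa using this
    have h1 := hcT (i * u) (hPT _ hiP (by linarith) (by linarith)) (by linarith) (by linarith)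
    have h2 := hl _ h1
    exact hlt _ _ (by push_cast; linarith)
  have hM2 : M ≤ N ∨ M + 2 * m ≤ 2 * N := by
    rcases le_total m (N - m) with h1 | h1
    · have := hbound (m - 1) (by omega) (by omega) (by omega)
      omega
    · have := hbound (N - m - 1) (by omega) (by omega) (by omega)
      omega
  lift N to ℕ using by omega
  lift m to ℕ using by omega
  lift M to ℕ using by omega
  push_cast at hN hMq
  refine ⟨P, u, s - ρ, N, m, M, ?_, by omega, by omega, by omega, by omega, hMq, ?_⟩
  · exact
      { u_pos := hu
        g_lt := hgu
        periodic := hper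
        gen := hgen
        zero_mem := hP.zero_mem
        g_pos := hP.g_pos
        gap := hP.gap
        mem_iff := by
          intro y
          rw [← hN]
          constructor
          · intro hy
            exact ⟨hTP y hy, hn y hy, by linarith [hl y hy]⟩
          · rintro ⟨h1, h2, h3⟩
            exact hPT y h1 (by linarith) h3
        top := by rw [← hN]; ring }
  · rw [add_mul, ← hN, ← hMq]; ring

lemma TailSystem.bCond_of_block {x : ℕ → ℝ} {T : ℕ → Set ℝ} {r : ℕ → ℝ} (h : TailSystem x T r)
    {k : ℕ} {P : Set ℝ} {u g : ℝ} {N m M : ℕ} (hI : IsBlock P u g (T (k + 2)) (r (k + 2)) N)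
    (hm : 1 ≤ m) (hmN : m < N) (hNM : N ≤ M) (hM : M ≤ N ∨ M + 2 * m ≤ 2 * N)
    (hq : x (k + 2) = M * u) (hp : x (k + 1) = (M + N) * u) : BCond x := by
  obtain ⟨i, hNi, hx3, hI3⟩ := h.halve hI (by omega)
  simp only [Nat.add_assoc, Nat.reduceAdd] at hx3 hI3
  by_cases hi : i = 1
  · subst hi
    have hN2 : N = 2 := by omega
    have hM2 : M = 2 := by omega
    subst hN2 hM2
    refine ⟨k, Or.inl ⟨?_, ?_⟩⟩
    · rw [hp, hx3]; push_cast; ring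
    · rw [hq, hx3]; push_cast; ring
  obtain ⟨i', hi', hx4, hI4⟩ := h.halve hI3 (by omega)
  simp only [Nat.add_assoc, Nat.reduceAdd] at hx4 hI4
  by_cases hi1 : i' = 1
  · subst hi1
    have hi2 : i = 2 := by omega
    have hN4 : N = 4 := by omega
    subst hi2 hN4
    obtain rfl | rfl | rfl : M = 4 ∨ M = 5 ∨ M = 6 := by omega
    · refine ⟨k + 1, Or.inl ⟨?_, ?_⟩⟩ <;> simp only [Nat.add_assoc, Nat.reduceAdd]
      · rw [hq, hx4]; push_cast; ring
      · rw [hx3, hx4]; push_cast; ring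
    · refine ⟨k, Or.inr (Or.inl ⟨?_, ?_, ?_⟩)⟩
      · rw [hp, hx4]; push_cast; ring
      · rw [hq, hx4]; push_cast; ring
      · rw [hx3, hx4]; push_cast; ring
    · refine ⟨k, Or.inr (Or.inr ⟨?_, ?_, ?_⟩)⟩
      · rw [hp, hx4]; push_cast; ring
      · rw [hq, hx4]; push_cast; ring
      · rw [hx3, hx4]; push_cast; ring
  obtain ⟨l, hl, hx5, -⟩ := h.halve hI4 (by omega)
  simp only [Nat.add_assoc, Nat.reduceAdd] at hx5
  refine ⟨k + 2, Or.inl ⟨?_, ?_⟩⟩ <;> simp only [Nat.add_assoc, Nat.reduceAdd]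
  · rw [hx3, hx5, hi', hl]; push_cast; ring
  · rw [hx4, hx5, hl]; push_cast; ring

lemma TailSystem.bCond_of_new_distance {x : ℕ → ℝ} {T : ℕ → Set ℝ} {r : ℕ → ℝ}
    (h : TailSystem x T r) {d : ℝ} (hd : 0 < d) (hne : ∀ m, d ≠ x (m + 1))
    (hC : ∀ a ∈ T 0, ∃ b ∈ T 0, |a - b| = d) : BCond x := by
  have hC' : ∀ a ∈ T 0, a - d ∈ T 0 ∨ a + d ∈ T 0 := by
    intro a ha
    obtain ⟨b, hb, hab⟩ := hC a ha
    rcases (abs_eq hd.le).1 hab with h1 | h1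
    · left; rwa [show a - d = b by linarith]
    · right; rwa [show a + d = b by linarith]
  have hdT : d ∈ T 0 := by
    rcases hC' 0 (h.zero_mem 0) with h1 | h1
    · have := h.nonneg _ _ h1; linarith
    · simpa using h1
  obtain ⟨k, hdk, hdk'⟩ := h.exists_leading hdT hd
  have ht : 0 < d - x (k + 1) := by
    refine lt_of_le_of_ne (h.nonneg _ _ hdk') fun e => hne k ?_
    linarith
  rcases k with _ | k
  · -- the point `r 1` can be moved neither down nor up
    exfalso
    have h1 := h.r_succ 0
    have h2 := h.fast 0
    simp only [zero_add] at *
    rcases hC' (r 1) (h.mono (Nat.zero_le 1) (h.top_mem 1)) with h3 | h3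
    · have := h.nonneg _ _ h3; linarith
    · have := h.le_top _ _ h3; linarith
  · simp only [Nat.add_assoc, Nat.reduceAdd] at hdk hdk' ht
    have hdr := h.le_top _ _ hdk
    have hf := h.fast k
    have key : ∀ a ∈ T (k + 1), a - d ∈ T (k + 1) ∨ a + d ∈ T (k + 1) ∨
        a + d - x (k + 1) ∈ T (k + 1) := by
      intro a ha
      have har := h.le_top _ _ ha
      rcases hC' a (h.mono (Nat.zero_le _) ha) with h1 | h1
      · left
        refine h.mem_of_lt h1 _ fun i hi => ?_
        have := h.x_le (n := i) (m := k) (by omega)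
        linarith
      · right
        refine (h.step k _).1 (h.mem_of_lt h1 _ fun i hi => ?_)
        have e1 := h.fast i
        have e2 := h.r_anti (n := i + 1) (m := k) (by omega)
        have e3 := h.r_succ k
        linarith
    have e : x (k + 2) + (d - x (k + 2)) = d := by ring
    obtain ⟨P, u, g, N, m, M, hI, h1, h2, h3, h4, h5, h6⟩ :=
      h.exists_block hdk' ht (by rw [e]; exact key)
    exact h.bCond_of_block hI h1 h2 h3 h4 h5 h6

lemma bCond_iff (x : ℕ → ℝ) : BCond x ↔
      ((∃ n : ℕ, 3 ≤ n ∧ x (n - 2) = 4 * x n ∧ x (n - 1) = 2 * x n) ∨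
       (∃ n : ℕ, 4 ≤ n ∧ x (n - 3) = 9 * x n ∧ x (n - 2) = 5 * x n ∧
          x (n - 1) = 2 * x n) ∨
       (∃ n : ℕ, 4 ≤ n ∧ x (n - 3) = 10 * x n ∧ x (n - 2) = 6 * x n ∧
          x (n - 1) = 2 * x n)) := by
  constructor
  · rintro ⟨n, h | h | h⟩
    · exact Or.inl ⟨n + 3, by omega, h⟩
    · exact Or.inr (Or.inl ⟨n + 4, by omega, h⟩)
    · exact Or.inr (Or.inr ⟨n + 4, by omega, h⟩)
  · rintro (⟨n, hn, h⟩ | ⟨n, hn, h⟩ | ⟨n, hn, h⟩)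
    · obtain ⟨n, rfl⟩ := Nat.exists_eq_add_of_le' hn
      exact ⟨n, Or.inl h⟩
    · obtain ⟨n, rfl⟩ := Nat.exists_eq_add_of_le' hn
      exact ⟨n, Or.inr (Or.inl h)⟩
    · obtain ⟨n, rfl⟩ := Nat.exists_eq_add_of_le' hn
      exact ⟨n, Or.inr (Or.inr h)⟩

/-- (Banakiewicz) For a fast convergent positive series `x`, the center of distances of
the central Cantor set `E(x)` is not minimal (i.e. differs from `{0} ∪ {x n : n ≥ 1}`)
iff one of the conditions (B1), (B2), (B3) holds. -/
theorem banakiewicz_center_of_distances (x : ℕ → ℝ)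
    (hpos : ∀ n, 1 ≤ n → 0 < x n) (hsum : Summable x)
    (hfast : ∀ n, 1 ≤ n → remainder x n < x n) :
    centerOfDistances (achievementSet x) ≠
        ({0} ∪ {t : ℝ | ∃ n : ℕ, 1 ≤ n ∧ t = x n}) ↔
      ((∃ n : ℕ, 3 ≤ n ∧ x (n - 2) = 4 * x n ∧ x (n - 1) = 2 * x n) ∨
       (∃ n : ℕ, 4 ≤ n ∧ x (n - 3) = 9 * x n ∧ x (n - 2) = 5 * x n ∧
          x (n - 1) = 2 * x n) ∨
       (∃ n : ℕ, 4 ≤ n ∧ x (n - 3) = 10 * x n ∧ x (n - 2) = 6 * x n ∧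
          x (n - 1) = 2 * x n)) := by
  have h := tailSystem hpos hsum hfast
  have hE : achievementSet x = tailSet x 0 := rfl
  rw [← bCond_iff, hE]
  constructor
  · intro hne
    by_contra hB
    refine hne (Set.Subset.antisymm ?_ ?_)
    · rintro d ⟨hd0, hd⟩
      by_contra hmem
      simp only [Set.mem_union, Set.mem_singleton_iff, Set.mem_ofPred_eq, not_or, not_exists,
        not_and] at hmem
      exact hB (h.bCond_of_new_distance (lt_of_le_of_ne hd0 (Ne.symm hmem.1))
        (fun m => hmem.2 (m + 1) (by omega)) hd)
    · rintro d (rfl | ⟨n, hn, rfl⟩)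
      · exact ⟨le_rfl, fun a ha => ⟨a, ha, by simp⟩⟩
      · obtain ⟨n, rfl⟩ := Nat.exists_eq_add_of_le' hn
        exact ⟨(hpos _ hn).le, h.x_mem_center n⟩
  · intro hB heq
    obtain ⟨d, hd, hne, hC⟩ := h.exists_new_distance hB
    have hmem : d ∈ centerOfDistances (tailSet x 0) := ⟨hd.le, hC⟩
    rw [heq] at hmem
    rcases hmem with h0 | ⟨n, hn, hdn⟩
    · exact hd.ne' h0
    · obtain ⟨n, rfl⟩ := Nat.exists_eq_add_of_le' hn
      exact hne n hdn
end

section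
/- (Kania) For every set B ⊆ ℝ with 0 ∈ B and B ⊆ [0, +∞), there exists a set A ⊆ ℝ whose center of distances equals B, i.e., 𝒞(A) = B. -/
/-!
Let `C = [0, ∞) \ B`. The set `A` is the complement of a set `P` of removed points such that

* every `c ∈ C` has a witness `x c ∉ P` with `x c + c ∈ P` and `x c - c ∈ P`;
* whenever `a + b ∈ P` and `a - b ∈ P` for some `b ∈ B`, also `a ∈ P`.

The first property keeps `c` out of the center of distances of `Pᶜ`, the second puts every
`b ∈ B` into it.

Enumerate `ℝ` as `(e i)` along the initial ordinal of the continuum, and choose `x i` by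
transfinite recursion outside the rational span `W i` of `e j` (`j ≤ i`) and `x j` (`j < i`);
this is possible because the rational dimension of `ℝ` is the continuum
(`exists_generic_family`). The set `P` consists of the points `q • x i + v` with `e i ∈ C`,
`v ∈ W i`, `0 < q ≤ 1` rational, where for `q = 1` only `v = ± e i` is allowed. The midpoint of
two points of `P` at stages `i ≤ j` again has this form at stage `j`, and its coefficient is `1`
only if both points are among `x j ± e j`; distinct such points are at half-distance `e j ∉ B`
(`midpoint_mem_removed`). By genericity `x i` itself never has this form
(`generic_notMem_removed`).
-/


open Set Filter Topology MeasureTheory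
open scoped Pointwise

open Cardinal in
/-- A choice of `x i` outside the rational span of all `e j`, `j ≤ i`, and all earlier `x j`,
for some enumeration `e` of the reals. The spans are abstracted to a family `W`. -/
lemma exists_generic_family :
    ∃ (I : Type) (_ : LinearOrder I) (e x : I → ℝ) (W : I → Submodule ℚ ℝ),
      Function.Surjective e ∧ (∀ i, e i ∈ W i) ∧ (∀ i, x i ∉ W i) ∧
      (∀ i j, i < j → W i ≤ W j) ∧ (∀ i j, i < j → x i ∈ W j) := by
  let I : Type := (𝔠 : Cardinal.{0}).ord.ToType
  have hI : #I = #ℝ := by simp [I, Cardinal.mk_real]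
  obtain ⟨e⟩ := Cardinal.eq.1 hI
  -- a spanning set of `W i`, as a function of the earlier choices
  let S : (i : I) → ((j : I) → j < i → ℝ) → Set ℝ := fun i f =>
    e '' Set.Iic i ∪ Set.range (fun j : Set.Iio i => f j.1 j.2)
  have key : ∀ i f, ∃ y : ℝ, y ∉ Submodule.span ℚ (S i f) := by
    intro i f
    by_contra! h
    have htop : Submodule.span ℚ (S i f) = ⊤ := by
      rw [Submodule.eq_top_iff']
      exact h
    have h1 : Module.rank ℚ (Submodule.span ℚ (S i f)) ≤ #(S i f) := rank_span_le _
    rw [htop, rank_top, Real.rank_rat_real] at h1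
    have hIio : #(Set.Iio i) < 𝔠 := by
      have h := Cardinal.mk_Iio_lt i (by simp [I])
      rwa [hI, Cardinal.mk_real] at h
    have hIic : #(Set.Iic i) < 𝔠 := by
      rw [← Set.Iio_insert]
      exact (Cardinal.mk_insert_le).trans_lt
        (Cardinal.add_lt_of_lt Cardinal.aleph0_le_continuum hIio
          (Cardinal.one_lt_aleph0.trans_le Cardinal.aleph0_le_continuum))
    refine absurd h1 (not_le.2 ?_)
    refine (Cardinal.mk_union_le _ _).trans_lt
      (Cardinal.add_lt_of_lt Cardinal.aleph0_le_continuum ?_ ?_)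
    · exact Cardinal.mk_image_le.trans_lt hIic
    · exact Cardinal.mk_range_le.trans_lt hIio
  choose g hg using key
  have wf : WellFounded ((· < ·) : I → I → Prop) := wellFounded_lt
  obtain ⟨x, hx⟩ : ∃ x : I → ℝ, ∀ i, x i = g i (fun j _ => x j) :=
    ⟨wf.fix g, fun i => wf.fix_eq g i⟩
  refine ⟨I, inferInstance, e, x, fun i => Submodule.span ℚ (S i (fun j _ => x j)),
    e.surjective, ?_, ?_, ?_, ?_⟩
  · intro i
    exact Submodule.subset_span (Or.inl ⟨i, le_refl i, rfl⟩)
  · intro i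
    have h := hg i (fun j _ => x j)
    rwa [← hx i] at h
  · intro i j hij
    refine Submodule.span_mono (Set.union_subset_union ?_ ?_)
    · exact Set.image_mono (Set.Iic_subset_Iic.2 hij.le)
    · rintro _ ⟨⟨k, hk⟩, rfl⟩
      exact ⟨⟨k, lt_trans hk hij⟩, rfl⟩
  · intro i j hij
    exact Submodule.subset_span (Or.inr ⟨⟨i, hij⟩, rfl⟩)

/-- The points `q • x i + v` of stage `i`, with `v ∈ W i` and `q ∈ (0, 1]` rational, where the
top coefficient `q = 1` is only allowed for the two points `x i ± e i`. -/
def stagePoints {I : Type} (e x : I → ℝ) (W : I → Submodule ℚ ℝ) (i : I) : Set ℝ :=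
  {r | ∃ (q : ℚ) (v : ℝ), 0 < q ∧ q ≤ 1 ∧ v ∈ W i ∧ (q = 1 → v = e i ∨ v = -e i) ∧
    r = q • x i + v}

/-- The set removed from `ℝ`: the points of all stages `i` at which `e i` is a nonnegative real
outside `B`. -/
def removed (B : Set ℝ) {I : Type} (e x : I → ℝ) (W : I → Submodule ℚ ℝ) : Set ℝ :=
  {r | ∃ i, 0 ≤ e i ∧ e i ∉ B ∧ r ∈ stagePoints e x W i}

section

variable {I : Type} {e x : I → ℝ} {W : I → Submodule ℚ ℝ}

/-- Averaging with a point of `W i` halves the coefficient of `x i`, which stays in `(0, 1)`. -/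
lemma half_mem_stagePoints {i : I} {r w : ℝ} (hr : r ∈ stagePoints e x W i) (hw : w ∈ W i) :
    (r + w) / 2 ∈ stagePoints e x W i := by
  obtain ⟨q, v, hq, hq1, hv, -, rfl⟩ := hr
  refine ⟨q / 2, (1 / 2 : ℚ) • (v + w), by linarith, by linarith,
    (W i).smul_mem _ ((W i).add_mem hv hw), fun h => by linarith, ?_⟩
  simp only [Rat.smul_def]
  push_cast
  ring

lemma notMem_of_mem_stagePoints (hx : ∀ i, x i ∉ W i) {i : I} {r : ℝ}
    (hr : r ∈ stagePoints e x W i) : r ∉ W i := by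
  obtain ⟨q, v, hq, -, hv, -, rfl⟩ := hr
  intro h
  have h1 : q • x i ∈ W i := ((W i).add_mem_iff_left hv).1 h
  exact hx i (((W i).smul_mem_iff hq.ne').1 h1)

variable [LinearOrder I]

lemma mem_of_mem_stagePoints_of_lt (hW : ∀ i j, i < j → W i ≤ W j)
    (hxW : ∀ i j, i < j → x i ∈ W j) {i j : I} (hij : i < j) {r : ℝ}
    (hr : r ∈ stagePoints e x W i) : r ∈ W j := by
  obtain ⟨q, v, -, -, hv, -, rfl⟩ := hr
  exact (W j).add_mem ((W j).smul_mem q (hxW i j hij)) (hW i j hij hv)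

/-- The removed set is closed under taking midpoints of pairs at half-distance in `B`. -/
lemma midpoint_mem_removed {B : Set ℝ} (hB : B ⊆ Set.Ici (0 : ℝ))
    (hW : ∀ i j, i < j → W i ≤ W j) (hxW : ∀ i j, i < j → x i ∈ W j)
    {a b : ℝ} (hb : b ∈ B) (h1 : a + b ∈ removed B e x W) (h2 : a - b ∈ removed B e x W) :
    a ∈ removed B e x W := by
  obtain ⟨i, hi0, hiB, hi⟩ := h1
  obtain ⟨j, hj0, hjB, hj⟩ := h2
  rcases lt_trichotomy i j with hij | rfl | hij
  · refine ⟨j, hj0, hjB, ?_⟩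
    have := half_mem_stagePoints hj (mem_of_mem_stagePoints_of_lt hW hxW hij hi)
    convert this using 1
    ring
  · refine ⟨i, hi0, hiB, ?_⟩
    obtain ⟨q, v, hq, hq1, hv, hqv, hr⟩ := hi
    obtain ⟨p, w, hp, hp1, hw, hpw, hs⟩ := hj
    refine ⟨(q + p) / 2, (1 / 2 : ℚ) • (v + w), by linarith, by linarith,
      (W i).smul_mem _ ((W i).add_mem hv hw), fun h => ?_, ?_⟩
    · -- both coefficients are `1`, so `v, w ∈ {± e i}`; opposite signs would give `b = ± e i`
      have hq' : q = 1 := by linarith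
      have hp' : p = 1 := by linarith
      subst hq' hp'
      have hb0 : 0 ≤ b := hB hb
      have hne : b ≠ e i := fun h => hiB (h ▸ hb)
      simp only [Rat.smul_def] at hr hs ⊢
      push_cast at hr hs ⊢
      rcases hqv rfl with rfl | rfl <;> rcases hpw rfl with rfl | rfl
      · left; ring
      · exact absurd (by linarith) hne
      · exact absurd (by linarith) hne
      · right; ring
    · simp only [Rat.smul_def] at hr hs ⊢
      push_cast
      linarith
  · refine ⟨i, hi0, hiB, ?_⟩
    have := half_mem_stagePoints hi (mem_of_mem_stagePoints_of_lt hW hxW hij hj)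
    convert this using 1
    ring

lemma generic_notMem_removed {B : Set ℝ} (h0 : (0 : ℝ) ∈ B) (hx : ∀ i, x i ∉ W i)
    (hW : ∀ i j, i < j → W i ≤ W j) (hxW : ∀ i j, i < j → x i ∈ W j) (i : I) :
    x i ∉ removed B e x W := by
  rintro ⟨j, -, hjB, hj⟩
  rcases lt_trichotomy i j with hij | rfl | hij
  · exact notMem_of_mem_stagePoints hx hj (hxW i j hij)
  · obtain ⟨q, v, hq, hq1, hv, hqv, hr⟩ := hj
    by_cases h : q = 1
    · subst h
      -- `v = 0` forces `e i = 0 ∈ B`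
      rw [one_smul] at hr
      refine hjB ?_
      have : e i = 0 := by rcases hqv rfl with h | h <;> linarith
      rwa [this]
    · refine hx i (((W i).smul_mem_iff (sub_ne_zero.2 (Ne.symm h))).1 ?_)
      have : (1 - q) • x i = v := by
        rw [sub_smul, one_smul]
        linarith
      rwa [this]
  · exact hx i (mem_of_mem_stagePoints_of_lt hW hxW hij hj)

end

/-- (Kania) Every set `B ⊆ [0, ∞)` containing `0` is the center of distances of some
set `A ⊆ ℝ`. -/
theorem every_set_is_center_of_distances (B : Set ℝ)
    (h0 : (0 : ℝ) ∈ B) (hB : B ⊆ Set.Ici (0 : ℝ)) :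
    ∃ A : Set ℝ, centerOfDistances A = B := by
  obtain ⟨I, _, e, x, W, he, heW, hx, hW, hxW⟩ := exists_generic_family
  refine ⟨(removed B e x W)ᶜ, Set.Subset.antisymm ?_ ?_⟩
  · rintro d ⟨hd0, hd⟩
    by_contra hdB
    obtain ⟨i, rfl⟩ := he d
    obtain ⟨y, hy, hxy⟩ := hd (x i) (generic_notMem_removed h0 hx hW hxW i)
    apply hy
    rcases (abs_eq hd0).1 hxy with h | h
    · exact ⟨i, hd0, hdB, 1, -e i, one_pos, le_rfl, (W i).neg_mem (heW i),
        fun _ => Or.inr rfl, by rw [one_smul]; linarith⟩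
    · exact ⟨i, hd0, hdB, 1, e i, one_pos, le_rfl, heW i,
        fun _ => Or.inl rfl, by rw [one_smul]; linarith⟩
  · intro b hb
    have hb0 : 0 ≤ b := hB hb
    refine ⟨hb0, fun a ha => ?_⟩
    by_cases h1 : a + b ∈ removed B e x W
    · refine ⟨a - b, fun h2 => ha (midpoint_mem_removed hB hW hxW hb h1 h2), ?_⟩
      rw [sub_sub_cancel, abs_of_nonneg hb0]
    · refine ⟨a + b, h1, ?_⟩
      rw [sub_add_cancel_left, abs_neg, abs_of_nonneg hb0]
end

section
/- The family of achievement sets is of the first category (meager) in the hyperspace of nonempty compact subsets of [0,1] equipped with the Hausdorff metric: the set { K : K is a nonempty compact subset of [0,1] and K = E(x) for some sequence x : ℕ → ℝ with ∑ₙ |x(n)| < ∞ } is meager in that hyperspace. -/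
/-!
The empty subsum shows that every achievement set contains `0`, so it suffices that the family of
nonempty compact `K ⊆ [0,1]` with `0 ∈ K` is nowhere dense. This family is closed in the Hausdorff
metric, and its complement is dense: replacing every point `t` of `K` by `max t e` for a small
`e > 0` moves `K` by at most `e` and removes `0` from it.
-/

open Set Filter Topology MeasureTheory
open scoped Pointwise

lemma zero_mem_achievementSet (x : ℕ → ℝ) : (0 : ℝ) ∈ achievementSet x :=
  ⟨∅, empty_subset _, hasSum_empty⟩

lemma isClosed_setOf_zero_mem :
    IsClosed {K : TopologicalSpace.NonemptyCompacts (Icc (0 : ℝ) 1) | (0 : Icc (0 : ℝ) 1) ∈ K} := by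
  convert TopologicalSpace.NonemptyCompacts.isClosed_inter_nonempty_of_isClosed
    (isClosed_singleton (x := (0 : Icc (0 : ℝ) 1))) using 3 with K
  simp

lemma dense_setOf_zero_notMem :
    Dense {K : TopologicalSpace.NonemptyCompacts (Icc (0 : ℝ) 1) |
      (0 : Icc (0 : ℝ) 1) ∈ K}ᶜ := by
  rw [Metric.dense_iff]
  intro K ε hε
  have he : 0 < min (ε / 2) 1 := by positivity
  let e : Icc (0 : ℝ) 1 := ⟨min (ε / 2) 1, he.le, min_le_right _ _⟩
  have he0 : (0 : Icc (0 : ℝ) 1) < e := he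
  have hmove (t : Icc (0 : ℝ) 1) : dist t (max t e) ≤ ε / 2 := by
    rcases le_total e t with h | h
    · rw [max_eq_left h, dist_self]; positivity
    · rw [max_eq_right h, Subtype.dist_eq, Real.dist_eq, abs_sub_comm,
        abs_of_nonneg (sub_nonneg.2 (show (t : ℝ) ≤ e from h))]
      have : (e : ℝ) ≤ ε / 2 := min_le_left _ _
      linarith [t.2.1]
  let f : Icc (0 : ℝ) 1 → Icc (0 : ℝ) 1 := fun t => max t e
  have hf : Continuous f := continuous_id.max continuous_const
  refine ⟨K.map f hf, ?_, ?_⟩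
  · rw [Metric.mem_ball, Metric.NonemptyCompacts.dist_eq,
      TopologicalSpace.NonemptyCompacts.coe_map]
    refine (Metric.hausdorffDist_le_of_mem_dist (half_pos hε).le ?_ ?_).trans_lt (half_lt_self hε)
    · rintro _ ⟨t, ht, rfl⟩
      exact ⟨t, ht, by rw [dist_comm]; exact hmove t⟩
    · exact fun t ht => ⟨f t, mem_image_of_mem f ht, hmove t⟩
  · intro h
    obtain ⟨t, -, ht⟩ : (0 : Icc (0 : ℝ) 1) ∈ f '' K := by
      rwa [← TopologicalSpace.NonemptyCompacts.coe_map hf]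
    exact (he0.trans_le (le_max_right t e)).ne' ht

/-- The family of achievement sets is meager in the hyperspace of nonempty compact
subsets of `[0,1]` with the Hausdorff metric. -/
theorem achievement_sets_meager :
    IsMeagre {K : TopologicalSpace.NonemptyCompacts (Set.Icc (0 : ℝ) 1) |
      ∃ x : ℕ → ℝ, (Summable fun n => |x n|) ∧
        Subtype.val '' (K : Set (Set.Icc (0 : ℝ) 1)) = achievementSet x} := by
  have hnd := (isClosed_isNowhereDense_iff_compl.2
    ⟨isClosed_setOf_zero_mem.isOpen_compl, dense_setOf_zero_notMem⟩).2
  refine hnd.isMeagre.mono ?_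
  rintro K ⟨x, -, hK⟩
  obtain ⟨t, ht, ht0⟩ : (0 : ℝ) ∈ Subtype.val '' (K : Set (Icc (0 : ℝ) 1)) :=
    hK ▸ zero_mem_achievementSet x
  have : t = 0 := Subtype.ext ht0
  exact this ▸ ht
end
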